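/- arXiv:2105.00710 — 3 statements merged into one kernel-verified Lean document; each statement's English description precedes it below -/
import Mathlib

section
/- Let (X1,X2) and (Y1,Y2) be pairs of jointly distributed random variables over finite domains such that the support of X1 is contained in the support of Y1 and, for every x1 in the support of X1, the support of the conditional distribution X2|X1=x1 is contained in the support of Y2|Y1=x1. Then Δ((X1,X2),(Y1,Y2)) ≤ sqrt((ln 2 / 2) · D_KL(X1 ‖ Y1)) + sqrt((ln 2 / 2) · E_{x1←X1}[ D_KL( X2|X1=x1 ‖ Y2|Y1=x1 ) ]). -/
open Finset Real

/-- Statistical distance between two distributions on a finite type. -/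
noncomputable def statDist {Ω : Type*} [Fintype Ω] (p q : Ω → ℝ) : ℝ :=
  (1 / 2) * ∑ x, |p x - q x|

/-- Relative entropy (KL divergence, in bits) between two distributions on a finite type. -/
noncomputable def klDiv {Ω : Type*} [Fintype Ω] (p q : Ω → ℝ) : ℝ :=
  ∑ x, p x * Real.logb 2 (p x / q x)

/-!
Pinsker's inequality is Cauchy–Schwarz applied to the pointwise bound
`3 (t - 1)² ≤ (2 t + 4) (t log t + 1 - t)`, whose two sides agree to second order at `t = 1` and
whose difference is convex. For the theorem, interpose the hybrid `(X₁, Y₂ | Y₁ = X₁)` between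
`(X₁, X₂)` and `(Y₁, Y₂)`: it has the same kernel as `(Y₁, Y₂)`, so its distance to `(Y₁, Y₂)` is
that of the first marginals, and the same first marginal as `(X₁, X₂)`, so the divergence of
`(X₁, X₂)` from it is the average of the conditional divergences. Pinsker's inequality bounds both
distances.
-/

section Pinsker

open InformationTheory (klFun klFun_apply klFun_one klFun_nonneg hasDerivAt_klFun)

lemma hasDerivAt_mul_klFun_sub_sq {t : ℝ} (ht : t ≠ 0) :
    HasDerivAt (fun t => (2 * t + 4) * klFun t - 3 * (t - 1) ^ 2)
      (2 * klFun t + (2 * t + 4) * log t - 6 * (t - 1)) t := by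
  have hlin := ((hasDerivAt_id' t).const_mul 2).add_const 4
  have hsq := (((hasDerivAt_id' t).sub_const 1).pow 2).const_mul 3
  exact ((hlin.mul (hasDerivAt_klFun ht)).sub hsq).congr_deriv (by push_cast; ring)

lemma convexOn_mul_klFun_sub_sq :
    ConvexOn ℝ (Set.Ici 0) fun t : ℝ => (2 * t + 4) * klFun t - 3 * (t - 1) ^ 2 := by
  refine convexOn_of_hasDerivWithinAt2_nonneg (convex_Ici 0)
    (f' := fun t => 2 * klFun t + (2 * t + 4) * log t - 6 * (t - 1))
    (f'' := fun t => 4 * (log t - (1 - t⁻¹))) (by fun_prop) ?_ ?_ ?_ <;>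
    rw [interior_Ici] <;> intro t (ht : 0 < t)
  · exact (hasDerivAt_mul_klFun_sub_sq ht.ne').hasDerivWithinAt
  · have hlin := ((hasDerivAt_id' t).const_mul 2).add_const 4
    have hderiv := (((hasDerivAt_klFun ht.ne').const_mul 2).add
      (hlin.mul (hasDerivAt_log ht.ne'))).sub (((hasDerivAt_id' t).sub_const 1).const_mul 6)
    exact (hderiv.congr_deriv (by field_simp; ring)).hasDerivWithinAt
  · exact mul_nonneg (by norm_num) (sub_nonneg.2 (one_sub_inv_le_log_of_pos ht))

lemma three_mul_sub_one_sq_le_mul_klFun {t : ℝ} (ht : 0 ≤ t) :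
    3 * (t - 1) ^ 2 ≤ (2 * t + 4) * klFun t := by
  have hderiv := hasDerivAt_mul_klFun_sub_sq one_ne_zero
  have hmin := convexOn_mul_klFun_sub_sq.isMinOn_of_rightDeriv_eq_zero (x := 1) (by simp)
    ((hderiv.hasDerivWithinAt.derivWithin (uniqueDiffWithinAt_Ioi 1)).trans
      (by simp [klFun_one]))
  simpa [klFun_one] using hmin ht

lemma sub_sq_le_mul_klFun_div {a b : ℝ} (ha : 0 ≤ a) (hb : 0 ≤ b) (hab : b = 0 → a = 0) :
    (a - b) ^ 2 ≤ (2 * a + 4 * b) / 3 * (b * klFun (a / b)) := by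
  rcases hb.eq_or_lt with rfl | hb
  · simp [hab rfl]
  calc (a - b) ^ 2 = b ^ 2 / 3 * (3 * (a / b - 1) ^ 2) := by field_simp
    _ ≤ b ^ 2 / 3 * ((2 * (a / b) + 4) * klFun (a / b)) := by
      gcongr b ^ 2 / 3 * ?_
      exact three_mul_sub_one_sq_le_mul_klFun (by positivity)
    _ = (2 * a + 4 * b) / 3 * (b * klFun (a / b)) := by field_simp

variable {Ω : Type*} [Fintype Ω] {p q : Ω → ℝ}

lemma sum_mul_klFun_div (hac : ∀ z, q z = 0 → p z = 0) :
    ∑ z, q z * klFun (p z / q z) = log 2 * klDiv p q + ∑ z, q z - ∑ z, p z := by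
  rw [klDiv, mul_sum, ← sum_add_distrib, ← sum_sub_distrib]
  refine sum_congr rfl fun z _ => ?_
  have hlog2 : log 2 ≠ 0 := (log_pos one_lt_two).ne'
  rw [klFun_apply, logb]
  by_cases hq : q z = 0
  · simp [hq, hac z hq]
  · field_simp

lemma sum_abs_sub_sq_le (hp0 : ∀ z, 0 ≤ p z) (hq0 : ∀ z, 0 ≤ q z)
    (hac : ∀ z, q z = 0 → p z = 0) :
    (∑ z, |p z - q z|) ^ 2 ≤
      (2 * ∑ z, p z + 4 * ∑ z, q z) / 3 * (log 2 * klDiv p q + ∑ z, q z - ∑ z, p z) := by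
  have hcs := sum_sq_le_sum_mul_sum_of_sq_le_mul univ (r := fun z => |p z - q z|)
    (f := fun z => (2 * p z + 4 * q z) / 3) (g := fun z => q z * klFun (p z / q z))
    (fun z _ => by linarith [hp0 z, hq0 z])
    (fun z _ => mul_nonneg (hq0 z) (klFun_nonneg (div_nonneg (hp0 z) (hq0 z))))
    (fun z _ => (sq_abs _).trans_le (sub_sq_le_mul_klFun_div (hp0 z) (hq0 z) (hac z)))
  rwa [← sum_div, sum_add_distrib, ← mul_sum, ← mul_sum, sum_mul_klFun_div hac] at hcs

theorem statDist_le_sqrt_klDiv (hp0 : ∀ z, 0 ≤ p z) (hq0 : ∀ z, 0 ≤ q z)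
    (hmass : ∑ z, q z ≤ ∑ z, p z) (hac : ∀ z, q z = 0 → p z = 0) :
    statDist p q ≤ √((∑ z, p z) * (log 2 / 2 * klDiv p q)) := by
  apply le_sqrt_of_sq_le
  have hexcess : 0 ≤ log 2 * klDiv p q + ∑ z, q z - ∑ z, p z := by
    rw [← sum_mul_klFun_div hac]
    exact sum_nonneg fun z _ => mul_nonneg (hq0 z) (klFun_nonneg (div_nonneg (hp0 z) (hq0 z)))
  have hp : 0 ≤ ∑ z, p z := sum_nonneg fun z _ => hp0 z
  calc statDist p q ^ 2 = (∑ z, |p z - q z|) ^ 2 / 4 := by rw [statDist]; ring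
    _ ≤ (2 * ∑ z, p z + 4 * ∑ z, q z) / 3 *
          (log 2 * klDiv p q + ∑ z, q z - ∑ z, p z) / 4 := by
      gcongr
      exact sum_abs_sub_sq_le hp0 hq0 hac
    _ ≤ (2 * ∑ z, p z) * (log 2 * klDiv p q) / 4 := by
      gcongr <;> linarith
    _ = (∑ z, p z) * (log 2 / 2 * klDiv p q) := by ring

end Pinsker

lemma statDist_triangle {Ω : Type*} [Fintype Ω] (p r q : Ω → ℝ) :
    statDist p q ≤ statDist p r + statDist r q := by
  simp only [statDist]
  rw [← mul_add, ← sum_add_distrib]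
  gcongr
  exact abs_sub_le _ _ _

section CompProd

variable {Ω₁ Ω₂ : Type*}

/-- The joint weight of a pair whose first component has weight `P` and whose second component,
given that the first is `x`, has weight `κ x`. -/
def compProd (P : Ω₁ → ℝ) (κ : Ω₁ → Ω₂ → ℝ) : Ω₁ × Ω₂ → ℝ :=
  fun z => P z.1 * κ z.1 z.2

lemma compProd_nonneg {P : Ω₁ → ℝ} {κ : Ω₁ → Ω₂ → ℝ} (hP : ∀ x, 0 ≤ P x)
    (hκ : ∀ x y, 0 ≤ κ x y) (z : Ω₁ × Ω₂) : 0 ≤ compProd P κ z :=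
  mul_nonneg (hP z.1) (hκ z.1 z.2)

variable [Fintype Ω₁] [Fintype Ω₂]

lemma sum_compProd {P : Ω₁ → ℝ} {κ : Ω₁ → Ω₂ → ℝ} (hκ : ∀ x, P x ≠ 0 → ∑ y, κ x y = 1) :
    ∑ z, compProd P κ z = ∑ x, P x := by
  rw [Fintype.sum_prod_type]
  refine sum_congr rfl fun x _ => ?_
  simp only [compProd, ← mul_sum]
  by_cases hx : P x = 0
  · rw [hx, zero_mul]
  · rw [hκ x hx, mul_one]

lemma statDist_compProd_left {P Q : Ω₁ → ℝ} {κ : Ω₁ → Ω₂ → ℝ} (hκ0 : ∀ x y, 0 ≤ κ x y)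
    (hκ1 : ∀ x, P x ≠ Q x → ∑ y, κ x y = 1) :
    statDist (compProd P κ) (compProd Q κ) = statDist P Q := by
  rw [statDist, statDist, Fintype.sum_prod_type]
  congr 1
  refine sum_congr rfl fun x _ => ?_
  simp only [compProd, ← sub_mul, abs_mul, abs_of_nonneg (hκ0 _ _), ← mul_sum]
  by_cases hx : P x = Q x
  · rw [hx, sub_self, abs_zero, zero_mul]
  · rw [hκ1 x hx, mul_one]

lemma klDiv_compProd_right (P : Ω₁ → ℝ) (κ η : Ω₁ → Ω₂ → ℝ) :
    klDiv (compProd P κ) (compProd P η) = ∑ x, P x * klDiv (κ x) (η x) := by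
  rw [klDiv, Fintype.sum_prod_type]
  refine sum_congr rfl fun x _ => ?_
  rw [klDiv, mul_sum]
  refine sum_congr rfl fun y _ => ?_
  simp only [compProd]
  by_cases hx : P x = 0
  · simp only [hx, zero_mul]
  · rw [mul_div_mul_left _ _ hx, mul_assoc]

end CompProd

section Disintegration

variable {Ω₁ Ω₂ : Type*} [Fintype Ω₂] {p q : Ω₁ × Ω₂ → ℝ}

/-- The weight of the first component of a pair with joint weight `p`. -/
def marginalFst (p : Ω₁ × Ω₂ → ℝ) : Ω₁ → ℝ :=
  fun x => ∑ y, p (x, y)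

/-- The weight of the second component of a pair with joint weight `p`, given that the first
component is `x`; it is identically zero when `marginalFst p x = 0`. -/
noncomputable def condSnd (p : Ω₁ × Ω₂ → ℝ) (x : Ω₁) : Ω₂ → ℝ :=
  fun y => p (x, y) / marginalFst p x

lemma marginalFst_nonneg (hp0 : ∀ z, 0 ≤ p z) (x : Ω₁) : 0 ≤ marginalFst p x :=
  sum_nonneg fun _ _ => hp0 _

lemma marginalFst_pos (hp0 : ∀ z, 0 ≤ p z) {z : Ω₁ × Ω₂} (hz : 0 < p z) :
    0 < marginalFst p z.1 :=
  sum_pos' (fun _ _ => hp0 _) ⟨z.2, mem_univ _, hz⟩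

lemma marginalFst_eq_zero_iff (hp0 : ∀ z, 0 ≤ p z) {x : Ω₁} :
    marginalFst p x = 0 ↔ ∀ y, p (x, y) = 0 := by
  simp [marginalFst, sum_eq_zero_iff_of_nonneg fun _ _ => hp0 _]

lemma marginalFst_eq_zero_of_eq_zero (hq0 : ∀ z, 0 ≤ q z) (hac : ∀ z, q z = 0 → p z = 0)
    (x : Ω₁) (hx : marginalFst q x = 0) : marginalFst p x = 0 :=
  sum_eq_zero fun y _ => hac _ ((marginalFst_eq_zero_iff hq0).1 hx y)

lemma condSnd_nonneg (hp0 : ∀ z, 0 ≤ p z) (x : Ω₁) (y : Ω₂) : 0 ≤ condSnd p x y :=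
  div_nonneg (hp0 _) (marginalFst_nonneg hp0 x)

lemma sum_condSnd {x : Ω₁} (hx : marginalFst p x ≠ 0) : ∑ y, condSnd p x y = 1 := by
  simp only [condSnd, ← sum_div]
  exact div_self hx

lemma compProd_marginalFst_condSnd (hp0 : ∀ z, 0 ≤ p z) :
    compProd (marginalFst p) (condSnd p) = p :=
  funext fun z => mul_div_cancel_of_imp' fun hz => (marginalFst_eq_zero_iff hp0).1 hz z.2

lemma eq_zero_of_compProd_condSnd_eq_zero (hp0 : ∀ z, 0 ≤ p z) (hq0 : ∀ z, 0 ≤ q z)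
    (hac : ∀ z, q z = 0 → p z = 0) (z : Ω₁ × Ω₂)
    (hz : compProd (marginalFst p) (condSnd q) z = 0) : p z = 0 := by
  have of_marginalFst (h : marginalFst p z.1 = 0) : p z = 0 :=
    (marginalFst_eq_zero_iff hp0).1 h z.2
  rcases mul_eq_zero.1 hz with hP | hcond
  · exact of_marginalFst hP
  rcases div_eq_zero_iff.1 hcond with hqz | hQ
  · exact hac z hqz
  · exact of_marginalFst (marginalFst_eq_zero_of_eq_zero hq0 hac z.1 hQ)

variable [Fintype Ω₁]

lemma sum_marginalFst (p : Ω₁ × Ω₂ → ℝ) : ∑ x, marginalFst p x = ∑ z, p z :=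
  (Fintype.sum_prod_type p).symm

lemma sum_compProd_condSnd (hq0 : ∀ z, 0 ≤ q z) (hac : ∀ z, q z = 0 → p z = 0) :
    ∑ z, compProd (marginalFst p) (condSnd q) z = ∑ z, p z := by
  rw [← sum_marginalFst p]
  exact sum_compProd fun x hP =>
    sum_condSnd fun hQ => hP (marginalFst_eq_zero_of_eq_zero hq0 hac x hQ)

lemma statDist_compProd_condSnd (hq0 : ∀ z, 0 ≤ q z) (hac : ∀ z, q z = 0 → p z = 0) :
    statDist (compProd (marginalFst p) (condSnd q)) q =
      statDist (marginalFst p) (marginalFst q) := by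
  have hcond (x : Ω₁) (hPQ : marginalFst p x ≠ marginalFst q x) : ∑ y, condSnd q x y = 1 :=
    sum_condSnd fun hQ => hPQ (by rw [hQ, marginalFst_eq_zero_of_eq_zero hq0 hac x hQ])
  have hdist := statDist_compProd_left (condSnd_nonneg hq0) hcond
  rwa [compProd_marginalFst_condSnd hq0] at hdist

theorem klDiv_compProd_condSnd (hp0 : ∀ z, 0 ≤ p z) (q : Ω₁ × Ω₂ → ℝ) :
    klDiv p (compProd (marginalFst p) (condSnd q)) =
      ∑ x, marginalFst p x * klDiv (condSnd p x) (condSnd q x) := by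
  rw [← klDiv_compProd_right, compProd_marginalFst_condSnd hp0]

end Disintegration

theorem stmt0_general {Ω₁ Ω₂ : Type*} [Fintype Ω₁] [Fintype Ω₂] (p q : Ω₁ × Ω₂ → ℝ)
    (hp0 : ∀ z, 0 ≤ p z) (hq0 : ∀ z, 0 ≤ q z) (hmass : ∑ z, q z ≤ ∑ z, p z)
    (hac : ∀ z, q z = 0 → p z = 0) :
    statDist p q ≤
      √((∑ z, p z) * (log 2 / 2 * klDiv (marginalFst p) (marginalFst q))) +
      √((∑ z, p z) * (log 2 / 2 *
        ∑ x, marginalFst p x * klDiv (condSnd p x) (condSnd q x))) := by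
  have hfst : statDist (marginalFst p) (marginalFst q) ≤
      √((∑ z, p z) * (log 2 / 2 * klDiv (marginalFst p) (marginalFst q))) := by
    simpa only [sum_marginalFst] using
      statDist_le_sqrt_klDiv (marginalFst_nonneg hp0) (marginalFst_nonneg hq0)
        (by simpa only [sum_marginalFst] using hmass) (marginalFst_eq_zero_of_eq_zero hq0 hac)
  have hsnd : statDist p (compProd (marginalFst p) (condSnd q)) ≤
      √((∑ z, p z) * (log 2 / 2 *
        ∑ x, marginalFst p x * klDiv (condSnd p x) (condSnd q x))) := by
    rw [← klDiv_compProd_condSnd hp0]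
    exact statDist_le_sqrt_klDiv hp0
      (compProd_nonneg (marginalFst_nonneg hp0) (condSnd_nonneg hq0))
      (sum_compProd_condSnd hq0 hac).le (eq_zero_of_compProd_condSnd_eq_zero hp0 hq0 hac)
  calc statDist p q
      ≤ statDist p (compProd (marginalFst p) (condSnd q)) +
          statDist (compProd (marginalFst p) (condSnd q)) q := statDist_triangle _ _ _
    _ = statDist (marginalFst p) (marginalFst q) +
          statDist p (compProd (marginalFst p) (condSnd q)) := by
      rw [statDist_compProd_condSnd hq0 hac, add_comm]
    _ ≤ _ := add_le_add hfst hsnd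

/-- For jointly distributed pairs `(X1,X2) ~ p` and `(Y1,Y2) ~ q` over finite
domains, with the support of `X1` contained in the support of `Y1` and, for every `x1` in the
support of `X1`, the support of `X2 | X1 = x1` contained in that of `Y2 | Y1 = x1`, we have
`Δ((X1,X2),(Y1,Y2)) ≤ √((ln 2 / 2)·D(X1‖Y1)) + √((ln 2 / 2)·E_{x1←X1}[D(X2|x1 ‖ Y2|x1)])`. -/
theorem stmt0 {Ω₁ Ω₂ : Type*} [Fintype Ω₁] [Fintype Ω₂]
    (p q : Ω₁ × Ω₂ → ℝ)
    (hp0 : ∀ z, 0 ≤ p z) (hp1 : ∑ z, p z = 1)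
    (hq0 : ∀ z, 0 ≤ q z) (hq1 : ∑ z, q z = 1)
    (hsupp1 : ∀ x1, 0 < ∑ x2, p (x1, x2) → 0 < ∑ x2, q (x1, x2))
    (hsupp2 : ∀ x1 x2, 0 < ∑ y2, p (x1, y2) → 0 < p (x1, x2) → 0 < q (x1, x2)) :
    statDist p q ≤
      Real.sqrt ((Real.log 2 / 2) *
          klDiv (fun x1 => ∑ x2, p (x1, x2)) (fun x1 => ∑ x2, q (x1, x2))) +
      Real.sqrt ((Real.log 2 / 2) *
          ∑ x1, (∑ x2, p (x1, x2)) *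
            klDiv (fun x2 => p (x1, x2) / ∑ y2, p (x1, y2))
                  (fun x2 => q (x1, x2) / ∑ y2, q (x1, y2))) := by
  have hac (z : Ω₁ × Ω₂) (hqz : q z = 0) : p z = 0 := by
    by_contra hpz
    have hpos : 0 < p z := (hp0 z).lt_of_ne' hpz
    exact (hsupp2 z.1 z.2 (marginalFst_pos hp0 hpos) hpos).ne' hqz
  have hbound := stmt0_general p q hp0 hq0 (hq1.trans hp1.symm).le hac
  rw [hp1, one_mul, one_mul] at hbound
  exact hbound
end

section
/- Let h : {0,1}^n → {0,1}^m be a function, let R be a random variable over a finite domain, let g be a function on the support of R with values in {0,1}^m, and let X be jointly distributed with R, taking values in {0,1}^n, such that h(X) = g(R) holds with probability 1. Set Y = g(R) and let δ ≥ 0. If H(Y) + H(X | R) ≥ n − δ, then E_{r←R}[ D_KL( X|_{R=r} ‖ Uniform(h⁻¹(g(r))) ) ] ≤ δ. -/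
open Finset Real

/-- Shannon entropy (in bits) of a distribution on a finite type. -/
noncomputable def entropy {Ω : Type*} [Fintype Ω] (p : Ω → ℝ) : ℝ :=
  -∑ x, p x * Real.logb 2 (p x)

/-- Pushforward of a distribution along a map. -/
noncomputable def push {Ω Ω' : Type*} [Fintype Ω] [DecidableEq Ω'] (p : Ω → ℝ)
    (f : Ω → Ω') : Ω' → ℝ :=
  fun y => ∑ x, if f x = y then p x else 0

/-!
Let `U` be uniform on the domain `α` of `h`. The law of `h(U)` at `y` is `|h⁻¹(y)| / |α|`, and the
relative entropy to a uniform distribution is the logarithm of the size of its support minus the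
entropy, so the terms `log |h⁻¹(Y)|` cancel in the exact identity
`E_{r←R}[D(X|_{R=r} ‖ Uniform(h⁻¹(g(r))))] + D(Y ‖ h(U)) = log |α| - H(Y) - H(X | R)`.
By Gibbs' inequality `D(Y ‖ h(U)) ≥ 0`.
-/

section RelativeEntropy

variable {Ω : Type*} [Fintype Ω] {p q : Ω → ℝ}

theorem sub_div_log_two_le_mul_logb_div {a b : ℝ} (ha : 0 ≤ a) (hb : 0 ≤ b)
    (hab : b = 0 → a = 0) : (a - b) / Real.log 2 ≤ a * Real.logb 2 (a / b) := by
  have hlog : 0 < Real.log 2 := Real.log_pos one_lt_two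
  rcases ha.eq_or_lt with rfl | ha
  · simpa using div_nonpos_of_nonpos_of_nonneg (neg_nonpos.2 hb) hlog.le
  have hb : 0 < b := hb.lt_of_ne' fun h => ha.ne' (hab h)
  have hone_sub : 1 - b / a ≤ Real.log (a / b) := by
    simpa using Real.one_sub_inv_le_log_of_pos (div_pos ha hb)
  calc (a - b) / Real.log 2 = a * (1 - b / a) / Real.log 2 := by field_simp
    _ ≤ a * Real.log (a / b) / Real.log 2 := by gcongr
    _ = a * Real.logb 2 (a / b) := mul_div_assoc ..

theorem klDiv_nonneg (hp : ∀ x, 0 ≤ p x) (hq : ∀ x, 0 ≤ q x) (hpq : ∀ x, q x = 0 → p x = 0)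
    (hsum : ∑ x, q x ≤ ∑ x, p x) : 0 ≤ klDiv p q :=
  calc 0 ≤ (∑ x, p x - ∑ x, q x) / Real.log 2 :=
        div_nonneg (sub_nonneg.2 hsum) (Real.log_nonneg one_le_two)
    _ = ∑ x, (p x - q x) / Real.log 2 := by rw [← sum_sub_distrib, sum_div]
    _ ≤ klDiv p q :=
        sum_le_sum fun x _ => sub_div_log_two_le_mul_logb_div (hp x) (hq x) (hpq x)

theorem klDiv_eq_neg_sum_mul_logb_sub_entropy (hpq : ∀ x, q x = 0 → p x = 0) :
    klDiv p q = -∑ x, p x * Real.logb 2 (q x) - entropy p := by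
  have hterm (x : Ω) : p x * Real.logb 2 (p x / q x)
      = p x * Real.logb 2 (p x) - p x * Real.logb 2 (q x) := by
    by_cases hx : p x = 0
    · simp [hx]
    · rw [Real.logb_div hx (mt (hpq x) hx), mul_sub]
  rw [klDiv, entropy, sum_congr rfl fun x _ => hterm x, sum_sub_distrib]
  ring

end RelativeEntropy

section Uniform

variable {α : Type*} [DecidableEq α]

/-- The uniform distribution on a finite set, as a function on the ambient type; it is
identically zero when the set is empty. -/
noncomputable def uniformOn (s : Finset α) : α → ℝ :=
  fun x => if x ∈ s then (#s : ℝ)⁻¹ else 0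

theorem uniformOn_nonneg (s : Finset α) (x : α) : 0 ≤ uniformOn s x := by
  unfold uniformOn
  positivity

theorem uniformOn_eq_zero_iff {s : Finset α} {x : α} : uniformOn s x = 0 ↔ x ∉ s := by
  by_cases hx : x ∈ s
  · simp [uniformOn, hx, card_ne_zero_of_mem hx]
  · simp [uniformOn, hx]

variable [Fintype α]

theorem sum_uniformOn {s : Finset α} (hs : s.Nonempty) : ∑ x, uniformOn s x = 1 := by
  simp [uniformOn, hs.card_ne_zero]

theorem klDiv_uniformOn {p : α → ℝ} {s : Finset α} (hp : ∑ x, p x = 1)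
    (hs : ∀ x, p x ≠ 0 → x ∈ s) :
    klDiv p (uniformOn s) = Real.logb 2 #s - entropy p := by
  have hcross (x : α) : p x * Real.logb 2 (uniformOn s x) = -(p x * Real.logb 2 #s) := by
    by_cases hx : p x = 0
    · simp [hx]
    · simp [uniformOn, hs x hx]
  rw [klDiv_eq_neg_sum_mul_logb_sub_entropy fun x hx =>
      not_imp_comm.1 (hs x) (uniformOn_eq_zero_iff.1 hx),
    sum_congr rfl fun x _ => hcross x, sum_neg_distrib, ← sum_mul, hp, one_mul, neg_neg]

end Uniform

section Push

variable {Ω Ω' : Type*} [Fintype Ω] [DecidableEq Ω']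

theorem push_nonneg {p : Ω → ℝ} (hp : ∀ x, 0 ≤ p x) (f : Ω → Ω') (y : Ω') : 0 ≤ push p f y :=
  sum_nonneg fun x _ => by split_ifs <;> simp [hp x]

theorem exists_ne_zero_of_push_ne_zero {p : Ω → ℝ} {f : Ω → Ω'} {y : Ω'} (hy : push p f y ≠ 0) :
    ∃ x, p x ≠ 0 ∧ f x = y := by
  obtain ⟨x, -, hx⟩ := exists_ne_zero_of_sum_ne_zero hy
  exact ⟨x, (ite_ne_right_iff.1 hx).symm⟩

theorem sum_push_mul [Fintype Ω'] (p : Ω → ℝ) (f : Ω → Ω') (F : Ω' → ℝ) :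
    ∑ y, push p f y * F y = ∑ x, p x * F (f x) := by
  simp only [push, sum_mul, ite_mul, zero_mul]
  rw [sum_comm]
  simp only [sum_ite_eq, mem_univ, if_true]

theorem sum_push [Fintype Ω'] (p : Ω → ℝ) (f : Ω → Ω') : ∑ y, push p f y = ∑ x, p x := by
  simpa using sum_push_mul p f 1

variable [DecidableEq Ω]

theorem push_uniformOn_univ (f : Ω → Ω') (y : Ω') :
    push (uniformOn univ) f y = #{x | f x = y} / Fintype.card Ω := by
  simp [push, uniformOn, ← sum_filter, div_eq_mul_inv]

theorem push_uniformOn_univ_ne_zero {f : Ω → Ω'} {y : Ω'} (hy : y ∈ Set.range f) :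
    push (uniformOn univ) f y ≠ 0 := by
  obtain ⟨x, rfl⟩ := hy
  have hfiber : x ∈ ({x' | f x' = f x} : Finset Ω) := by simp
  have : Nonempty Ω := ⟨x⟩
  rw [push_uniformOn_univ]
  exact div_ne_zero (Nat.cast_ne_zero.2 (card_ne_zero_of_mem hfiber))
    (Nat.cast_ne_zero.2 Fintype.card_ne_zero)

theorem klDiv_push_uniformOn_univ [Fintype Ω'] {q : Ω' → ℝ} {f : Ω → Ω'}
    (hq : ∑ y, q y = 1) (hqf : ∀ y, q y ≠ 0 → y ∈ Set.range f) :
    klDiv q (push (uniformOn univ) f) = Real.logb 2 (Fintype.card Ω)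
      - ∑ y, q y * Real.logb 2 #{x | f x = y} - entropy q := by
  have habs (y : Ω') (hy : q y ≠ 0) : push (uniformOn univ) f y ≠ 0 :=
    push_uniformOn_univ_ne_zero (hqf y hy)
  have hcross (y : Ω') : q y * Real.logb 2 (push (uniformOn univ) f y)
      = q y * Real.logb 2 #{x | f x = y} - q y * Real.logb 2 (Fintype.card Ω) := by
    by_cases hy : q y = 0
    · simp [hy]
    · have hdiv := habs y hy
      rw [push_uniformOn_univ] at hdiv ⊢
      obtain ⟨hfiber, hcard⟩ := div_ne_zero_iff.1 hdiv
      rw [Real.logb_div hfiber hcard, mul_sub]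
  rw [klDiv_eq_neg_sum_mul_logb_sub_entropy fun y => not_imp_not.1 (habs y),
    sum_congr rfl fun y _ => hcross y, sum_sub_distrib, ← sum_mul, hq, one_mul, neg_sub]

theorem klDiv_push_uniformOn_univ_nonneg [Fintype Ω'] {q : Ω' → ℝ} {f : Ω → Ω'}
    (hq0 : ∀ y, 0 ≤ q y) (hq1 : ∑ y, q y = 1) (hqf : ∀ y, q y ≠ 0 → y ∈ Set.range f) :
    0 ≤ klDiv q (push (uniformOn univ) f) := by
  have habs (y : Ω') (hy : q y ≠ 0) : push (uniformOn univ) f y ≠ 0 :=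
    push_uniformOn_univ_ne_zero (hqf y hy)
  obtain ⟨y, -, hy⟩ := exists_ne_zero_of_sum_ne_zero (hq1.trans_ne one_ne_zero)
  obtain ⟨x, -⟩ := hqf y hy
  have hsum : ∑ y, push (uniformOn univ) f y = 1 := by
    rw [sum_push, sum_uniformOn ⟨x, mem_univ x⟩]
  exact klDiv_nonneg hq0 (push_nonneg (uniformOn_nonneg _) _) (fun y => not_imp_not.1 (habs y))
    (hsum.trans hq1.symm).le

end Push

section Joint

variable {ρ α β : Type*} [Fintype α]

/-- The law of the first component `R` of a pair `(R, X)` with joint law `p`. -/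
noncomputable def marginal (p : ρ × α → ℝ) : ρ → ℝ :=
  fun r => ∑ x, p (r, x)

/-- The conditional law `X|_{R=r}` for a pair `(R, X)` with joint law `p`; it is identically zero
when `R = r` has probability zero. -/
noncomputable def condDist (p : ρ × α → ℝ) (r : ρ) : α → ℝ :=
  fun x => p (r, x) / marginal p r

/-- The conditional entropy `H(X | R)`, in bits, of a pair `(R, X)` with joint law `p`. -/
noncomputable def condEntropy [Fintype ρ] (p : ρ × α → ℝ) : ℝ :=
  ∑ r, marginal p r * entropy (condDist p r)

theorem sum_condDist {p : ρ × α → ℝ} {r : ρ} (hr : marginal p r ≠ 0) :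
    ∑ x, condDist p r x = 1 := by
  rw [← div_self hr]
  exact (sum_div ..).symm

variable [Fintype ρ]

theorem mem_range_of_push_fst_ne_zero [DecidableEq β] {h : α → β} {g : ρ → β} {p : ρ × α → ℝ}
    (hgh : ∀ r x, p (r, x) ≠ 0 → h x = g r) {y : β} (hy : push p (fun z => g z.1) y ≠ 0) :
    y ∈ Set.range h := by
  obtain ⟨⟨r, x⟩, hp, rfl⟩ := exists_ne_zero_of_push_ne_zero hy
  exact ⟨x, hgh r x hp⟩

theorem sum_push_fst_mul [Fintype β] [DecidableEq β] (p : ρ × α → ℝ) (g : ρ → β) (F : β → ℝ) :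
    ∑ y, push p (fun z => g z.1) y * F y = ∑ r, marginal p r * F (g r) := by
  simp only [sum_push_mul, Fintype.sum_prod_type, marginal, sum_mul]

variable [DecidableEq α]

theorem sum_marginal_mul_klDiv_uniformOn {p : ρ × α → ℝ} {s : ρ → Finset α}
    (hs : ∀ r x, p (r, x) ≠ 0 → x ∈ s r) :
    ∑ r, marginal p r * klDiv (condDist p r) (uniformOn (s r))
      = ∑ r, marginal p r * Real.logb 2 #(s r) - condEntropy p := by
  rw [condEntropy, ← sum_sub_distrib]
  refine sum_congr rfl fun r _ => ?_
  by_cases hr : marginal p r = 0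
  · simp [hr]
  · rw [klDiv_uniformOn (sum_condDist hr) fun x hx => hs r x (div_ne_zero_iff.1 hx).1, mul_sub]

variable [Fintype β] [DecidableEq β] {h : α → β} {g : ρ → β} {p : ρ × α → ℝ}

theorem sum_marginal_mul_klDiv_fiber_add_klDiv_push (hp : ∑ z, p z = 1)
    (hgh : ∀ r x, p (r, x) ≠ 0 → h x = g r) :
    ∑ r, marginal p r * klDiv (condDist p r) (uniformOn {x | h x = g r})
        + klDiv (push p fun z => g z.1) (push (uniformOn univ) h)
      = Real.logb 2 (Fintype.card α) - entropy (push p fun z => g z.1) - condEntropy p := by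
  have hfiber (r : ρ) (x : α) (hx : p (r, x) ≠ 0) : x ∈ ({x' | h x' = g r} : Finset α) := by
    simpa using hgh r x hx
  rw [sum_marginal_mul_klDiv_uniformOn hfiber,
    klDiv_push_uniformOn_univ ((sum_push ..).trans hp) fun _ => mem_range_of_push_fst_ne_zero hgh,
    sum_push_fst_mul p g fun y => Real.logb 2 #{x | h x = y}]
  ring

theorem stmt4_general (hp0 : ∀ z, 0 ≤ p z) (hp1 : ∑ z, p z = 1)
    (hgh : ∀ r x, 0 < p (r, x) → h x = g r) {δ : ℝ}
    (hent : Real.logb 2 (Fintype.card α) - δ ≤ entropy (push p fun z => g z.1) + condEntropy p) :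
    ∑ r, marginal p r * klDiv (condDist p r) (uniformOn {x | h x = g r}) ≤ δ := by
  replace hgh (r : ρ) (x : α) (hx : p (r, x) ≠ 0) : h x = g r :=
    hgh r x ((hp0 _).lt_of_ne' hx)
  linarith [sum_marginal_mul_klDiv_fiber_add_klDiv_push hp1 hgh,
    klDiv_push_uniformOn_univ_nonneg (push_nonneg hp0 _) ((sum_push ..).trans hp1)
      fun _ => mem_range_of_push_fst_ne_zero hgh]

end Joint

/-- Let `h : {0,1}ⁿ → {0,1}^m`, `R` a finite random variable, `g` a map from `R`'s
domain to `{0,1}^m`, and `X` jointly distributed with `R` (joint law `p`) with `h(X) = g(R)` a.s.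
Set `Y = g(R)`.  If `H(Y) + H(X | R) ≥ n − δ` (with `H(X|R) = E_{r←R}[H(X|_{R=r})]`), then
`E_{r←R}[ D_KL( X|_{R=r} ‖ Uniform(h⁻¹(g(r))) ) ] ≤ δ`. -/
theorem stmt4 {ΩR : Type*} [Fintype ΩR] [DecidableEq ΩR] (n m : ℕ)
    (h : (Fin n → Bool) → (Fin m → Bool)) (g : ΩR → (Fin m → Bool))
    (p : ΩR × (Fin n → Bool) → ℝ)
    (hp0 : ∀ z, 0 ≤ p z) (hp1 : ∑ z, p z = 1)
    (has : ∀ r x, 0 < p (r, x) → h x = g r)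
    (δ : ℝ) (hδ : 0 ≤ δ)
    (hent : entropy (push p (fun rx => g rx.1)) +
        (∑ r, (∑ x, p (r, x)) * entropy (fun x => p (r, x) / ∑ x', p (r, x'))) ≥ (n : ℝ) - δ) :
    ∑ r, (∑ x, p (r, x)) *
        klDiv (fun x => p (r, x) / ∑ x', p (r, x'))
          (fun x => if h x = g r then
              ((Finset.univ.filter (fun x' => h x' = g r)).card : ℝ)⁻¹ else 0) ≤ δ := by
  have hcard : Real.logb 2 (Fintype.card (Fin n → Bool)) = n := by simp [Real.logb_pow]
  simpa +unfoldPartialApp only [uniformOn, mem_filter_univ, marginal, condDist] using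
    stmt4_general hp0 hp1 has (hcard ▸ hent)
end

section
/- Let R and C be finite sets, let c : {0,1} × R → C be a function, let B be uniform on {0,1}, W uniform on R, and B' uniform on {0,1}, all independent. Suppose Δ( (c(B,W), B), (c(B,W), B') ) ≤ ε. Sample (b, w) uniformly from {0,1} × R, and then sample (b', w') uniformly from the set {(b'', w'') ∈ {0,1} × R : c(b'', w'') = c(b, w)}. Then Pr[b' = b] ≤ 1/2 + 2·sqrt(ε). -/
open Finset Real

/-!
Write `Y = c (B, W)`. Resampling an opening of `Y` defines a randomized distinguisher between
`(Y, B)` and `(Y, B')`: on input `(y, b)` it accepts with the posterior probability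
`Pr[B = b | Y = y]`. It accepts `(Y, B)` with probability `Pr[b' = b]`, and it accepts `(Y, B')`
with probability exactly `1 / 2`, since the posterior given `Y` sums to `1`. A distinguisher has
advantage at most the statistical distance, so `Pr[b' = b] ≤ 1 / 2 + ε`, and `ε ≤ √ε` unless
`1 < ε`, when the bound is trivial.
-/

lemma sum_mul_sub_sum_mul_le_statDist {Ω : Type*} [Fintype Ω] {p q f : Ω → ℝ}
    (hpq : ∑ x, p x = ∑ x, q x) (hf₀ : ∀ x, 0 ≤ f x) (hf₁ : ∀ x, f x ≤ 1) :
    ∑ x, p x * f x - ∑ x, q x * f x ≤ statDist p q := by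
  have abs_centered_le (x : Ω) : |f x - 1 / 2| ≤ 1 / 2 :=
    abs_le.mpr ⟨by linarith [hf₀ x], by linarith [hf₁ x]⟩
  -- As `p` and `q` have the same mass, centering `f` at `1 / 2` does not change the difference.
  calc ∑ x, p x * f x - ∑ x, q x * f x
      = ∑ x, (p x - q x) * (f x - 1 / 2) := by
        simp only [sub_mul, mul_sub, sum_sub_distrib, ← sum_mul, hpq]
        ring
    _ ≤ ∑ x, |p x - q x| * (1 / 2) := by
        refine sum_le_sum fun x _ => (le_abs_self _).trans ?_
        rw [abs_mul]
        exact mul_le_mul_of_nonneg_left (abs_centered_le x) (abs_nonneg _)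
    _ = statDist p q := by rw [statDist, ← sum_mul, mul_comm]

section JointLaw

variable {C M : Type*} [Fintype M]

/-- The law of `(Y, B')` when `(Y, B)` has law `p` and `B'` is uniform and independent of `Y`. -/
noncomputable def decouple (p : C × M → ℝ) (z : C × M) : ℝ :=
  (∑ m, p (z.1, m)) / Fintype.card M

/-- The conditional probability `Pr[B = m | Y = y]`, as a function of `(y, m)`, when `(Y, B)` has
law `p`. It is `0` where `Pr[Y = y] = 0`. -/
noncomputable def posterior (p : C × M → ℝ) (z : C × M) : ℝ :=
  p z / ∑ m, p (z.1, m)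

lemma posterior_nonneg {p : C × M → ℝ} (hp : ∀ z, 0 ≤ p z) (z : C × M) : 0 ≤ posterior p z :=
  div_nonneg (hp z) (sum_nonneg fun _ _ => hp _)

lemma posterior_le_one {p : C × M → ℝ} (hp : ∀ z, 0 ≤ p z) (z : C × M) : posterior p z ≤ 1 :=
  div_le_one_of_le₀
    (single_le_sum (f := fun m => p (z.1, m)) (fun _ _ => hp _) (mem_univ z.2))
    (sum_nonneg fun _ _ => hp _)

variable [Fintype C]

lemma sum_decouple [Nonempty M] (p : C × M → ℝ) : ∑ z, decouple p z = ∑ z, p z := by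
  simp only [Fintype.sum_prod_type, decouple, sum_const, card_univ, nsmul_eq_mul]
  exact sum_congr rfl fun y _ => mul_div_cancel₀ _ (by simp)

lemma sum_decouple_mul_posterior (p : C × M → ℝ) :
    ∑ z, decouple p z * posterior p z = (∑ z, p z) / Fintype.card M := by
  simp only [Fintype.sum_prod_type, decouple, posterior, ← mul_sum, ← sum_div]
  rw [sum_div]
  refine sum_congr rfl fun y _ => ?_
  rw [div_mul_eq_mul_div, mul_div_assoc', mul_self_div_self]

lemma sum_mul_posterior_le [Nonempty M] {p : C × M → ℝ} (hp : ∀ z, 0 ≤ p z) :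
    ∑ z, p z * posterior p z ≤ (∑ z, p z) / Fintype.card M + statDist p (decouple p) := by
  have advantage_le := sum_mul_sub_sum_mul_le_statDist (sum_decouple p).symm
    (posterior_nonneg hp) (posterior_le_one hp)
  rw [sum_decouple_mul_posterior] at advantage_le
  linarith

end JointLaw

section UniformSample

variable {X Z C M : Type*} [Fintype X] [DecidableEq Z] [DecidableEq C] [DecidableEq M]

/-- The law of `f x` for `x` uniform on the finite type `X`, as a real-valued mass function. -/
noncomputable def mapUniform (f : X → Z) (z : Z) : ℝ :=
  #{x | f x = z} / Fintype.card X

lemma mapUniform_nonneg (f : X → Z) (z : Z) : 0 ≤ mapUniform f z := by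
  unfold mapUniform
  positivity

lemma sum_mapUniform_mul [Fintype Z] (f : X → Z) (g : Z → ℝ) :
    ∑ z, mapUniform f z * g z = (∑ x, g (f x)) / Fintype.card X := by
  rw [← sum_fiberwise' univ f g, sum_div]
  simp only [mapUniform, sum_const, nsmul_eq_mul, div_mul_eq_mul_div]

lemma sum_mapUniform [Fintype Z] [Nonempty X] (f : X → Z) : ∑ z, mapUniform f z = 1 := by
  simpa using sum_mapUniform_mul f 1

lemma sum_mapUniform_prodMk [Fintype M] (c : X → C) (b : X → M) (y : C) :
    ∑ m, mapUniform (fun x => (c x, b x)) (y, m) = mapUniform c y := by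
  simp only [mapUniform, Prod.mk.injEq, ← sum_div, ← Nat.cast_sum, ← filter_filter]
  rw [← card_eq_sum_card_fiberwise fun _ _ => mem_coe.mpr (mem_univ _)]

lemma mapUniform_prodMk_fst {R : Type*} [Fintype M] [Fintype R] (c : M × R → C) (z : C × M) :
    mapUniform (fun x => (c x, x.1)) z =
      #{w | c (z.2, w) = z.1} / (Fintype.card M * Fintype.card R) := by
  have card_fiber : #{x : M × R | (c x, x.1) = z} = #{w | c (z.2, w) = z.1} := by
    refine card_bij' (fun x _ => x.2) (fun w _ => (z.2, w)) ?_ ?_ ?_ ?_ <;> grind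
  rw [mapUniform, card_fiber, Fintype.card_prod, Nat.cast_mul]

lemma decouple_mapUniform_prodMk [Fintype M] (c : X → C) (b : X → M) (z : C × M) :
    decouple (mapUniform fun x => (c x, b x)) z =
      #{x | c x = z.1} / (Fintype.card M * Fintype.card X) := by
  rw [decouple, sum_mapUniform_prodMk, mapUniform, div_div, mul_comm]

lemma posterior_mapUniform_prodMk [Fintype M] [Nonempty X] (c : X → C) (b : X → M) (z : C × M) :
    posterior (mapUniform fun x => (c x, b x)) z =
      #{x | c x = z.1 ∧ b x = z.2} / #{x | c x = z.1} := by
  rw [posterior, sum_mapUniform_prodMk, mapUniform, mapUniform,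
    div_div_div_cancel_right₀ (by simp)]
  simp only [Prod.ext_iff]

/-- The probability that `b x' = b x`, for `x` uniform on `X` and `x'` then uniform on the fibre of
`c` through `x`: the success probability of guessing `b x` from `c x` by resampling. -/
noncomputable def resampleAgreeProb (c : X → C) (b : X → M) : ℝ :=
  (∑ x, (#{x' | c x' = c x ∧ b x' = b x} : ℝ) / #{x' | c x' = c x}) / Fintype.card X

lemma resampleAgreeProb_le_one (c : X → C) (b : X → M) : resampleAgreeProb c b ≤ 1 := by
  refine div_le_one_of_le₀ ?_ (Nat.cast_nonneg _)
  have term_le_one (x : X) :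
      (#{x' | c x' = c x ∧ b x' = b x} : ℝ) / #{x' | c x' = c x} ≤ 1 := by
    refine div_le_one_of_le₀ (Nat.cast_le.mpr (card_le_card ?_)) (Nat.cast_nonneg _)
    exact monotone_filter_right _ fun _ _ h => h.1
  simpa using sum_le_sum fun x (_ : x ∈ univ) => term_le_one x

lemma resampleAgreeProb_eq_sum_mul_posterior [Fintype C] [Fintype M] [Nonempty X]
    (c : X → C) (b : X → M) :
    resampleAgreeProb c b = ∑ z, mapUniform (fun x => (c x, b x)) z *
      posterior (mapUniform fun x => (c x, b x)) z := by
  simp only [sum_mapUniform_mul, posterior_mapUniform_prodMk, resampleAgreeProb]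

theorem stmt6_general [Fintype C] [Fintype M] [Nonempty M] [Nonempty X]
    (c : X → C) (b : X → M) {ε : ℝ}
    (hhide : statDist (mapUniform fun x => (c x, b x))
      (decouple (mapUniform fun x => (c x, b x))) ≤ ε) :
    resampleAgreeProb c b ≤ 1 / Fintype.card M + ε := by
  rw [resampleAgreeProb_eq_sum_mul_posterior]
  refine (sum_mul_posterior_le (mapUniform_nonneg _)).trans ?_
  rw [sum_mapUniform]
  gcongr

end UniformSample

lemma le_add_sqrt_of_le_one_of_le_add {a x ε : ℝ} (ha : 0 ≤ a) (hx : x ≤ 1) (hxε : x ≤ a + ε) :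
    x ≤ a + √ε := by
  rcases le_total ε 1 with hε | hε
  · have : ε ≤ √ε := by
      rcases le_total ε 0 with hε₀ | hε₀
      · exact hε₀.trans (sqrt_nonneg ε)
      · exact le_sqrt_of_sq_le (pow_le_of_le_one hε₀ hε two_ne_zero)
    linarith
  · linarith [one_le_sqrt.mpr hε]

/-- Let `c : {0,1} × R → C` be a commitment function that is `ε`-statistically
hiding, i.e. `Δ((c(B,W),B), (c(B,W),B')) ≤ ε` for independent uniform `B, W, B'`.  Sample `(b,w)`
uniformly, then `(b',w')` uniformly from `{(b'',w'') : c(b'',w'') = c(b,w)}`.  Then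
`Pr[b' = b] ≤ 1/2 + 2√ε`. -/
theorem stmt6 {R C : Type*} [Fintype R] [Fintype C] [DecidableEq C] [Nonempty R]
    (c : Bool × R → C) (ε : ℝ)
    (hhide : statDist
        (fun yb : C × Bool =>
          ((Finset.univ.filter (fun w : R => c (yb.2, w) = yb.1)).card : ℝ) /
            (2 * (Fintype.card R : ℝ)))
        (fun yb : C × Bool =>
          ((Finset.univ.filter (fun bw : Bool × R => c bw = yb.1)).card : ℝ) /
            (2 * (2 * (Fintype.card R : ℝ)))) ≤ ε) :
    (∑ bw : Bool × R,
        ((Finset.univ.filter (fun bw' : Bool × R => c bw' = c bw ∧ bw'.1 = bw.1)).card : ℝ) /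
          ((Finset.univ.filter (fun bw' : Bool × R => c bw' = c bw)).card : ℝ)) /
      (2 * (Fintype.card R : ℝ)) ≤ 1 / 2 + 2 * Real.sqrt ε := by
  have hhide' : statDist (mapUniform fun x => (c x, x.1))
      (decouple (mapUniform fun x => (c x, x.1))) ≤ ε := by
    rw [funext (decouple_mapUniform_prodMk c Prod.fst), funext (mapUniform_prodMk_fst c)]
    simpa using hhide
  have agree_le : resampleAgreeProb c Prod.fst ≤ 1 / 2 + √ε :=
    le_add_sqrt_of_le_one_of_le_add (by norm_num) (resampleAgreeProb_le_one c Prod.fst)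
      (by simpa using stmt6_general c Prod.fst hhide')
  calc _ = resampleAgreeProb c Prod.fst := by simp [resampleAgreeProb]
    _ ≤ 1 / 2 + √ε := agree_le
    _ ≤ 1 / 2 + 2 * √ε := by linarith [sqrt_nonneg ε]
end
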